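/- Single world property: if there exist an intuitionistic Kripke model M and a team t such that M,t ⊭ φ, then there exist an intuitionistic Kripke model M' and a world w such that M',w ⊭ φ (i.e., M',{w} ⊭ φ). -/

import Mathlib

/-- Formulas of the language L: atoms, ⊥, ∧, ∨, →, and inquisitive disjunction ⩾. -/
inductive Formula (P : Type) : Type
  | atom : P → Formula P
  | bot  : Formula P
  | and  : Formula P → Formula P → Formula P
  | or   : Formula P → Formula P → Formula P
  | impl : Formula P → Formula P → Formula P
  | iorr : Formula P → Formula P → Formula P

namespace Formula

/-- Negation ¬φ := φ → ⊥. -/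
def neg {P : Type} (φ : Formula P) : Formula P := Formula.impl φ Formula.bot

/-- Polar question ?φ := φ ⩾ ¬φ. -/
def question {P : Type} (φ : Formula P) : Formula P := Formula.iorr φ φ.neg

/-- A standard formula contains no occurrence of inquisitive disjunction ⩾. -/
def standard {P : Type} : Formula P → Prop
  | atom _ => True
  | bot => True
  | and φ ψ => φ.standard ∧ ψ.standard
  | or φ ψ => φ.standard ∧ ψ.standard
  | impl φ ψ => φ.standard ∧ ψ.standard
  | iorr _ _ => False

end Formula

/-- An intuitionistic Kripke model: a partially ordered set of worlds with a
persistent valuation. -/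
structure KripkeModel (P : Type) where
  W : Type
  R : W → W → Prop
  refl : ∀ w, R w w
  antisymm : ∀ w v, R w v → R v w → w = v
  trans : ∀ w v u, R w v → R v u → R w u
  V : W → P → Prop
  persistent : ∀ w v p, R w v → V w p → V v p

/-- R[t], the up-set generated by a team t. -/
def KripkeModel.upset {P : Type} (M : KripkeModel P) (t : Set M.W) : Set M.W :=
  {v | ∃ w ∈ t, M.R w v}

/-- The support relation M,t ⊨ φ between teams and formulas. -/
def support {P : Type} (M : KripkeModel P) : Formula P → Set M.W → Prop
  | .atom p, t => ∀ w ∈ t, M.V w p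
  | .bot, t => t = ∅
  | .and φ ψ, t => support M φ t ∧ support M ψ t
  | .or φ ψ, t => ∃ t₁ t₂, t = t₁ ∪ t₂ ∧ support M φ t₁ ∧ support M ψ t₂
  | .impl φ ψ, t => ∀ t', t' ⊆ M.upset t → support M φ t' → support M ψ t'
  | .iorr φ ψ, t => support M φ t ∨ support M ψ t

/-- Truth at a world: M,w ⊨ φ iff M,{w} ⊨ φ. -/
def truth {P : Type} (M : KripkeModel P) (w : M.W) (φ : Formula P) : Prop :=
  support M φ {w}

/-- A formula is truth-conditional if support at a team amounts to truth at each world. -/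
def truthConditional {P : Type} (φ : Formula P) : Prop :=
  ∀ (M : KripkeModel P) (t : Set M.W), support M φ t ↔ ∀ w ∈ t, truth M w φ

/-- The partial truth-value function: `tvalIs M w φ b` says T(w,φ) is defined with value b
(b = true for value 1, i.e. M,w ⊨ φ; b = false for value 0, i.e. M,w ⊨ ¬φ). -/
def tvalIs {P : Type} (M : KripkeModel P) (w : M.W) (φ : Formula P) : Bool → Prop
  | true => truth M w φ
  | false => truth M w φ.neg

/-- Support is inherited by every team inside the generated up-set. -/
theorem support_persistent {P : Type} (M : KripkeModel P) (φ : Formula P) :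
    ∀ t t' : Set M.W, t' ⊆ M.upset t → support M φ t → support M φ t' := by
  induction φ with
  | atom p =>
    intro t t' h hs w hw
    obtain ⟨v, hv, hr⟩ := h hw
    exact M.persistent _ _ _ hr (hs v hv)
  | bot =>
    intro t t' h hs
    have hs : t = ∅ := hs
    subst hs
    refine Set.eq_empty_of_forall_notMem fun w hw => ?_
    obtain ⟨v, hv, _⟩ := h hw
    exact hv
  | and a b iha ihb =>
    intro t t' h hs
    exact ⟨iha t t' h hs.1, ihb t t' h hs.2⟩
  | or a b iha ihb =>
    rintro t t' h ⟨t₁, t₂, rfl, h1, h2⟩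
    refine ⟨t' ∩ M.upset t₁, t' ∩ M.upset t₂, ?_,
      iha _ _ Set.inter_subset_right h1, ihb _ _ Set.inter_subset_right h2⟩
    ext w
    constructor
    · intro hw
      obtain ⟨v, hv | hv, hr⟩ := h hw
      · exact Or.inl ⟨hw, v, hv, hr⟩
      · exact Or.inr ⟨hw, v, hv, hr⟩
    · rintro (hw | hw) <;> exact hw.1
  | impl a b _ _ =>
    intro t t' h hs u hu
    apply hs u
    intro w hw
    obtain ⟨v, hv, hr⟩ := hu hw
    obtain ⟨x, hx, hr'⟩ := h hv
    exact ⟨x, hx, M.trans _ _ _ hr' hr⟩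
  | iorr a b iha ihb =>
    rintro t t' h (hs | hs)
    · exact Or.inl (iha t t' h hs)
    · exact Or.inr (ihb t t' h hs)

/-- The order on the rooted model. -/
def rootR {P : Type} (M : KripkeModel P) : Option M.W → Option M.W → Prop
  | none, _ => True
  | some _, none => False
  | some w, some v => M.R w v

/-- The valuation on the rooted model: nothing holds at the root. -/
def rootV {P : Type} (M : KripkeModel P) : Option M.W → P → Prop
  | none, _ => False
  | some w, p => M.V w p

/-- Add a fresh root below all worlds. -/
def rooted {P : Type} (M : KripkeModel P) : KripkeModel P where
  W := Option M.W
  R := rootR M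
  refl := by rintro (_ | w); exacts [trivial, M.refl w]
  antisymm := by
    rintro (_ | w) (_ | v) h1 h2
    · rfl
    · exact h2.elim
    · exact h1.elim
    · exact congrArg some (M.antisymm w v h1 h2)
  trans := by
    rintro (_ | w) (_ | v) (_ | u) h1 h2
    all_goals first | trivial | exact h1.elim | exact h2.elim | exact M.trans _ _ _ h1 h2
  V := rootV M
  persistent := by
    rintro (_ | w) (_ | v) p h1 h2
    all_goals first | exact h2.elim | exact h1.elim | exact M.persistent _ _ _ h1 h2

/-- The image in the rooted model of a team. -/
def lift_team {P : Type} (M : KripkeModel P) (t : Set M.W) : Set (rooted M).W :=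
  (some : M.W → Option M.W) '' t

theorem upset_lift {P : Type} (M : KripkeModel P) (t : Set M.W) :
    (rooted M).upset (lift_team M t) = lift_team M (M.upset t) := by
  ext x
  constructor
  · rintro ⟨_, ⟨w, hw, rfl⟩, hr⟩
    rcases x with _ | v
    · exact hr.elim
    · exact ⟨v, ⟨w, hw, hr⟩, rfl⟩
  · rintro ⟨v, ⟨w, hw, hr⟩, rfl⟩
    exact ⟨some w, ⟨w, hw, rfl⟩, hr⟩

theorem lift_inj {P : Type} (M : KripkeModel P) {s t : Set M.W}
    (h : lift_team M s = lift_team M t) : s = t :=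
  Set.image_injective.mpr (Option.some_injective _) h

theorem support_lift {P : Type} (M : KripkeModel P) (φ : Formula P) :
    ∀ t : Set M.W, support (rooted M) φ (lift_team M t) ↔ support M φ t := by
  induction φ with
  | atom p =>
    intro t
    constructor
    · intro h w hw
      exact h (some w) ⟨w, hw, rfl⟩
    · rintro h _ ⟨w, hw, rfl⟩
      exact h w hw
  | bot => intro t; exact Set.image_eq_empty
  | and a b iha ihb => intro t; exact and_congr (iha t) (ihb t)
  | or a b iha ihb =>
    intro t
    constructor
    · rintro ⟨t₁, t₂, he, h1, h2⟩
      obtain ⟨s₁, _, rfl⟩ := Set.subset_image_iff.mp (he ▸ Set.subset_union_left : t₁ ⊆ lift_team M t)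
      obtain ⟨s₂, _, rfl⟩ := Set.subset_image_iff.mp (he ▸ Set.subset_union_right : t₂ ⊆ lift_team M t)
      exact ⟨s₁, s₂, lift_inj M (he.trans (Set.image_union _ _ _).symm),
        (iha _).1 h1, (ihb _).1 h2⟩
    · rintro ⟨s₁, s₂, rfl, h1, h2⟩
      exact ⟨lift_team M s₁, lift_team M s₂, Set.image_union _ _ _, (iha _).2 h1, (ihb _).2 h2⟩
  | impl a b iha ihb =>
    intro t
    constructor
    · intro h s hs ha
      refine (ihb s).1 (h _ ?_ ((iha s).2 ha))
      rw [upset_lift]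
      exact Set.image_mono hs
    · intro h s hs ha
      rw [upset_lift] at hs
      obtain ⟨u, hu, rfl⟩ := Set.subset_image_iff.mp hs
      exact (ihb u).2 (h u hu ((iha u).1 ha))
  | iorr a b iha ihb => intro t; exact or_congr (iha t) (ihb t)

/-- single world property: any formula falsifiable at some team is
falsifiable at a single world of some model. -/
theorem single_world_property {P : Type} (φ : Formula P)
    (h : ∃ (M : KripkeModel P) (t : Set M.W), ¬ support M φ t) :
    ∃ (M' : KripkeModel P) (w : M'.W), ¬ truth M' w φ := by
  obtain ⟨M, t, ht⟩ := h
  refine ⟨rooted M, (none : Option M.W), fun hr => ht ?_⟩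
  rw [← support_lift]
  exact support_persistent (rooted M) φ {(none : Option M.W)} _ (fun x _ => ⟨(none : Option M.W), rfl, trivial⟩) hr
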